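/- arXiv:1401.3315 — 5 statements merged into one kernel-verified Lean document; each statement's English description precedes it below -/
import Mathlib

section
/- Let α > −1 and β be real parameters and let J(x,y,z) denote the 3×3 Jacobian matrix of the vector field of system (18). Then the averaged matrix A = (1/(2π)) ∫₀^{2π} J(√(1+α) sin s, √(1+α) cos s, 0) ds equals ![![α(1+α), 1, 0], ![−1, α(1+α), 0], ![0, 0, β²]], and the eigenvalues of A over ℂ are β², α² + α + i, and α² + α − i; in particular the real parts of its eigenvalues are β², α² + α, α² + α. -/
open Real MeasureTheory

/-- The vector field of system (18). -/
noncomputable def vf18 (α β : ℝ) : (Fin 3 → ℝ) → (Fin 3 → ℝ) := fun v =>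
  ![v 1 + v 0 * (1 - v 0 ^ 2 - v 1 ^ 2) * (1 + α - v 0 ^ 2 - v 1 ^ 2),
    -v 0 + v 1 * (1 - v 0 ^ 2 - v 1 ^ 2) * (1 + α - v 0 ^ 2 - v 1 ^ 2),
    β ^ 2 * v 2 - v 2 ^ 3]

/-- The Jacobian matrix of a vector field on ℝ³: entry (i, j) is the partial derivative of
the i-th component with respect to the j-th coordinate. -/
noncomputable def jacobian (F : (Fin 3 → ℝ) → (Fin 3 → ℝ)) (p : Fin 3 → ℝ) :
    Matrix (Fin 3) (Fin 3) ℝ :=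
  Matrix.of fun i j => fderiv ℝ (fun v => F v i) p (Pi.single j 1)

/-!
System (18) consists of a planar field `ω (y, -x) + g (x² + y²) (x, y)` and a decoupled equation
`z' = h z`. Along a horizontal circle of radius `r` about the `z`-axis only `x²`, `xy` and `y²` vary
in the Jacobian; their averages are `r² / 2`, `0` and `r² / 2`, so the averaged Jacobian is a
rotation-scaling block with eigenvalues `g (r²) + r² g' (r²) ± ω i`, together with `h' z`.
For (18), `g ρ = (1 - ρ) (1 + α - ρ)` vanishes at `ρ = 1 + α` and has derivative `α` there.
-/

/-- The vector field on ℝ³ that rotates clockwise with angular speed `ω` around the third axis, has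
radial growth rate `g`, and follows `h` along the axis. The rate `g` is a function of the squared
radius. -/
def rotatingField (ω : ℝ) (g h : ℝ → ℝ) : (Fin 3 → ℝ) → (Fin 3 → ℝ) := fun v =>
  ![ω * v 1 + v 0 * g (v 0 ^ 2 + v 1 ^ 2), -ω * v 0 + v 1 * g (v 0 ^ 2 + v 1 ^ 2), h (v 2)]

/-- The average over `[0, 2π]` of the Jacobian of `F` along the curve `γ`, taken entrywise. -/
noncomputable def averagedJacobian (F : (Fin 3 → ℝ) → (Fin 3 → ℝ)) (γ : ℝ → Fin 3 → ℝ) :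
    Matrix (Fin 3) (Fin 3) ℝ :=
  Matrix.of fun i j => (2 * π)⁻¹ * ∫ s in (0 : ℝ)..(2 * π), jacobian F (γ s) i j

theorem vf18_eq_rotatingField (α β : ℝ) :
    vf18 α β =
      rotatingField 1 (fun ρ => (1 - ρ) * (1 + α - ρ)) (fun z => β ^ 2 * z - z ^ 3) := by
  funext v
  simp only [vf18, rotatingField]
  congr! 2 <;> ring_nf

theorem jacobian_row_eq_of_hasFDerivAt {F : (Fin 3 → ℝ) → (Fin 3 → ℝ)} {p : Fin 3 → ℝ} {i : Fin 3}
    {L : (Fin 3 → ℝ) →L[ℝ] ℝ} (hL : HasFDerivAt (fun v => F v i) L p) :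
    jacobian F p i = fun j => L (Pi.single j 1) := by
  funext j
  rw [jacobian, Matrix.of_apply, hL.fderiv]

theorem jacobian_rotatingField {ω g' h' : ℝ} {g h : ℝ → ℝ} {p : Fin 3 → ℝ}
    (hg : HasDerivAt g g' (p 0 ^ 2 + p 1 ^ 2)) (hh : HasDerivAt h h' (p 2)) :
    jacobian (rotatingField ω g h) p =
      !![g (p 0 ^ 2 + p 1 ^ 2) + 2 * g' * p 0 ^ 2, ω + 2 * g' * (p 0 * p 1), 0;
         -ω + 2 * g' * (p 0 * p 1), g (p 0 ^ 2 + p 1 ^ 2) + 2 * g' * p 1 ^ 2, 0;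
         0, 0, h'] := by
  have coord (i : Fin 3) := hasFDerivAt_apply (𝕜 := ℝ) (F' := fun _ : Fin 3 => ℝ) i p
  have rate := hg.comp_hasFDerivAt p (((coord 0).pow 2).add ((coord 1).pow 2))
  have row₀ := jacobian_row_eq_of_hasFDerivAt (F := rotatingField ω g h) (i := 0)
    (((coord 1).const_mul ω).add ((coord 0).mul rate))
  have row₁ := jacobian_row_eq_of_hasFDerivAt (F := rotatingField ω g h) (i := 1)
    (((coord 0).const_mul (-ω)).add ((coord 1).mul rate))
  have row₂ := jacobian_row_eq_of_hasFDerivAt (F := rotatingField ω g h) (i := 2)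
    (hh.comp_hasFDerivAt p (coord 2))
  ext i j
  fin_cases i
  · refine (congrFun row₀ j).trans ?_
    fin_cases j <;> simp <;> ring
  · refine (congrFun row₁ j).trans ?_
    fin_cases j <;> simp <;> ring
  · refine (congrFun row₂ j).trans ?_
    fin_cases j <;> simp

theorem jacobian_rotatingField_circle {ω g' h' r z : ℝ} {g h : ℝ → ℝ}
    (hg : HasDerivAt g g' (r ^ 2)) (hh : HasDerivAt h h' z) (s : ℝ) :
    jacobian (rotatingField ω g h) ![r * sin s, r * cos s, z] =
      !![g (r ^ 2) + 2 * r ^ 2 * g' * sin s ^ 2, ω + 2 * r ^ 2 * g' * (sin s * cos s), 0;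
         -ω + 2 * r ^ 2 * g' * (sin s * cos s), g (r ^ 2) + 2 * r ^ 2 * g' * cos s ^ 2, 0;
         0, 0, h'] := by
  have sq_radius : (r * sin s) ^ 2 + (r * cos s) ^ 2 = r ^ 2 := by
    linear_combination r ^ 2 * sin_sq_add_cos_sq s
  rw [jacobian_rotatingField (g' := g') (by simpa [sq_radius] using hg) hh]
  simp only [Matrix.cons_val, sq_radius]
  congr! 4 <;> ring_nf

theorem mean_const {T : ℝ} (hT : T ≠ 0) (c : ℝ) : T⁻¹ * ∫ _ in (0 : ℝ)..T, c = c := by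
  rw [intervalIntegral.integral_const, sub_zero, smul_eq_mul, inv_mul_cancel_left₀ hT]

theorem mean_const_add_mul {f : ℝ → ℝ} {T : ℝ} (hT : T ≠ 0)
    (hf : IntervalIntegrable f volume 0 T) (a b : ℝ) :
    T⁻¹ * ∫ s in (0 : ℝ)..T, (a + b * f s) = a + b * (T⁻¹ * ∫ s in (0 : ℝ)..T, f s) := by
  rw [intervalIntegral.integral_add intervalIntegrable_const (hf.const_mul b), mul_add,
    mean_const hT, intervalIntegral.integral_const_mul, mul_left_comm]

theorem mean_sin_sq : (2 * π)⁻¹ * ∫ s in (0 : ℝ)..(2 * π), sin s ^ 2 = 1 / 2 := by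
  rw [integral_sin_sq, sin_zero, sin_two_pi]
  field_simp
  ring

theorem mean_cos_sq : (2 * π)⁻¹ * ∫ s in (0 : ℝ)..(2 * π), cos s ^ 2 = 1 / 2 := by
  rw [integral_cos_sq, sin_zero, sin_two_pi]
  field_simp
  ring

theorem mean_sin_mul_cos : (2 * π)⁻¹ * ∫ s in (0 : ℝ)..(2 * π), sin s * cos s = 0 := by
  simp

theorem averagedJacobian_rotatingField_circle {ω g' h' r z : ℝ} {g h : ℝ → ℝ}
    (hg : HasDerivAt g g' (r ^ 2)) (hh : HasDerivAt h h' z) :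
    averagedJacobian (rotatingField ω g h) (fun s => ![r * sin s, r * cos s, z]) =
      !![g (r ^ 2) + r ^ 2 * g', ω, 0; -ω, g (r ^ 2) + r ^ 2 * g', 0; 0, 0, h'] := by
  have mean_affine {f : ℝ → ℝ} (hf : Continuous f) (a b : ℝ) :=
    mean_const_add_mul two_pi_pos.ne' (hf.intervalIntegrable 0 (2 * π)) a b
  have mean_xx : (2 * π)⁻¹ * ∫ s in (0 : ℝ)..(2 * π),
      (g (r ^ 2) + 2 * r ^ 2 * g' * sin s ^ 2) = g (r ^ 2) + r ^ 2 * g' := by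
    rw [mean_affine (by fun_prop), mean_sin_sq]
    ring
  have mean_yy : (2 * π)⁻¹ * ∫ s in (0 : ℝ)..(2 * π),
      (g (r ^ 2) + 2 * r ^ 2 * g' * cos s ^ 2) = g (r ^ 2) + r ^ 2 * g' := by
    rw [mean_affine (by fun_prop), mean_cos_sq]
    ring
  have mean_xy (a : ℝ) : (2 * π)⁻¹ * ∫ s in (0 : ℝ)..(2 * π),
      (a + 2 * r ^ 2 * g' * (sin s * cos s)) = a := by
    rw [mean_affine (by fun_prop), mean_sin_mul_cos, mul_zero, add_zero]
  have mean_z := mean_const two_pi_pos.ne'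
  ext i j
  simp only [averagedJacobian, jacobian_rotatingField_circle hg hh, Matrix.of_apply]
  fin_cases i <;> fin_cases j
  exacts [mean_xx, mean_xy ω, mean_z 0, mean_xy (-ω), mean_yy, mean_z 0,
    mean_z 0, mean_z 0, mean_z h']

theorem averagedJacobian_vf18_circle {α r : ℝ} (β : ℝ) (hr : r ^ 2 = 1 + α) :
    averagedJacobian (vf18 α β) (fun s => ![r * sin s, r * cos s, 0]) =
      !![α * (1 + α), 1, 0; -1, α * (1 + α), 0; 0, 0, β ^ 2] := by
  have hg : HasDerivAt (fun ρ => (1 - ρ) * (1 + α - ρ)) α (r ^ 2) := by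
    refine (((hasDerivAt_id' (r ^ 2)).const_sub 1).mul
      ((hasDerivAt_id' (r ^ 2)).const_sub (1 + α))).congr_deriv ?_
    rw [hr]
    ring
  have hh : HasDerivAt (fun z => β ^ 2 * z - z ^ 3) (β ^ 2) 0 := by
    refine (((hasDerivAt_id' (0 : ℝ)).const_mul (β ^ 2)).sub (hasDerivAt_pow 3 0)).congr_deriv ?_
    norm_num
  rw [vf18_eq_rotatingField, averagedJacobian_rotatingField_circle hg hh, hr]
  ring_nf

section RotationScaling

open Polynomial

variable {R : Type*} [CommRing R] {i : R}

theorem charpoly_rotation_scaling_block (hi : i ^ 2 = -1) (a b c : R) :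
    (!![a, b, 0; -b, a, 0; 0, 0, c] : Matrix (Fin 3) (Fin 3) R).charpoly =
      (({c, a + b * i, a - b * i} : Multiset R).map fun t => X - C t).prod := by
  have hCi : (C i : R[X]) ^ 2 = -1 := by rw [← C_pow, hi, C_neg, C_1]
  have charpoly_eq : (!![a, b, 0; -b, a, 0; 0, 0, c] : Matrix (Fin 3) (Fin 3) R).charpoly =
      (X - C c) * ((X - C a) ^ 2 + C b ^ 2) := by
    simp [Matrix.charpoly, Matrix.charmatrix, Matrix.det_fin_three]
    ring
  have quadratic_eq : (X - C a) ^ 2 + C b ^ 2 = (X - C (a + b * i)) * (X - C (a - b * i)) := by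
    simp only [C_add, C_sub, C_mul]
    linear_combination C b ^ 2 * hCi
  rw [charpoly_eq, quadratic_eq]
  simp

theorem roots_charpoly_rotation_scaling_block [IsDomain R] (hi : i ^ 2 = -1) (a b c : R) :
    (!![a, b, 0; -b, a, 0; 0, 0, c] : Matrix (Fin 3) (Fin 3) R).charpoly.roots =
      {c, a + b * i, a - b * i} := by
  rw [charpoly_rotation_scaling_block hi, roots_multiset_prod_X_sub_C]

end RotationScaling

/-- the averaged Jacobian along the limit cycle (ii) of system (18),
its explicit value, and its eigenvalues (with real parts β², α² + α, α² + α). -/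
theorem stmt_5 (α β : ℝ) (hα : -1 < α) :
    ∀ A : Matrix (Fin 3) (Fin 3) ℝ,
      (A = Matrix.of fun i j =>
        (2 * π)⁻¹ * ∫ s in (0:ℝ)..(2 * π),
          jacobian (vf18 α β)
            ![Real.sqrt (1 + α) * Real.sin s, Real.sqrt (1 + α) * Real.cos s, 0] i j) →
      A = !![α * (1 + α), 1, 0; -1, α * (1 + α), 0; 0, 0, β ^ 2] ∧
      (A.map (Complex.ofReal)).charpoly.roots =
        {(β : ℂ) ^ 2, (α : ℂ) ^ 2 + (α : ℂ) + Complex.I, (α : ℂ) ^ 2 + (α : ℂ) - Complex.I} ∧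
      ((A.map (Complex.ofReal)).charpoly.roots.map Complex.re) =
        {β ^ 2, α ^ 2 + α, α ^ 2 + α} := by
  intro A hA
  have A_eq : A = !![α * (1 + α), 1, 0; -1, α * (1 + α), 0; 0, 0, β ^ 2] :=
    hA.trans (averagedJacobian_vf18_circle β (sq_sqrt (by linarith)))
  have map_eq : A.map Complex.ofReal =
      !![(α : ℂ) ^ 2 + α, 1, 0; -1, (α : ℂ) ^ 2 + α, 0; 0, 0, (β : ℂ) ^ 2] := by
    rw [A_eq]
    ext i j
    fin_cases i <;> fin_cases j <;> simp [mul_add, sq, add_comm]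
  have roots_eq : (A.map Complex.ofReal).charpoly.roots =
      {(β : ℂ) ^ 2, (α : ℂ) ^ 2 + (α : ℂ) + Complex.I, (α : ℂ) ^ 2 + (α : ℂ) - Complex.I} := by
    rw [map_eq, roots_charpoly_rotation_scaling_block Complex.I_sq, one_mul]
  refine ⟨A_eq, roots_eq, ?_⟩
  rw [roots_eq]
  simp [← Complex.ofReal_pow]
end

section
/- Let α, β be real parameters and let J(x,y,z) denote the 3×3 Jacobian matrix of the vector field of system (18). Then for either sign ε = ±1, the averaged matrix A = (1/(2π)) ∫₀^{2π} J(sin s, cos s, εβ) ds equals ![![−α, 1, 0], ![−1, −α, 0], ![0, 0, −2β²]], and the eigenvalues of A over ℂ are −2β², −α + i, and −α − i; in particular the real parts of its eigenvalues are −2β², −α, −α. -/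
open Real MeasureTheory

/-! System (18) is an instance of a field `(ω y + x g(r²), -ω x + y g(r²), h(z))`, `r² = x² + y²`.
Along a horizontal circle of radius `ρ` about the `z`-axis, the coefficients `g(ρ²)`, `g'(ρ²)`,
`h'(z)` of its Jacobian are constant, so averaging only replaces `x²`, `y²` by `ρ² / 2` and `x y`
by `0`. What is left is the block sum of a rotation-scaling matrix, with eigenvalues
`g(ρ²) + ρ² g'(ρ²) ± ω i`, and the scalar `h'(z)`. For (18), `g(u) = (1 - u)(1 + α - u)`, so
`g(1) = 0` and `g'(1) = -α`. -/

section SpiralMatrix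

variable {R S : Type*}

/-- The block sum of the planar spiral generator with growth rate `a` and angular velocity `ω`
(clockwise, as in system (18)) and the scalar `c`. -/
def spiralMatrix [Zero R] [Neg R] (a ω c : R) : Matrix (Fin 3) (Fin 3) R :=
  !![a, ω, 0; -ω, a, 0; 0, 0, c]

theorem spiralMatrix_map {F : Type*} [AddGroup R] [AddGroup S] [FunLike F R S]
    [AddMonoidHomClass F R S] (f : F) (a ω c : R) :
    (spiralMatrix a ω c).map f = spiralMatrix (f a) (f ω) (f c) := by
  ext i j
  fin_cases i <;> fin_cases j <;> simp [spiralMatrix]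

open Polynomial in
theorem charpoly_spiralMatrix [CommRing R] (a ω c : R) :
    (spiralMatrix a ω c).charpoly = (X - C c) * ((X - C a) ^ 2 + C ω ^ 2) := by
  have hcharmatrix : (spiralMatrix a ω c).charmatrix =
      !![X - C a, -C ω, 0; C ω, X - C a, 0; 0, 0, X - C c] := by
    ext1 i j
    fin_cases i <;> fin_cases j <;> simp [spiralMatrix, Matrix.charmatrix]
  rw [Matrix.charpoly, hcharmatrix, Matrix.det_fin_three]
  simp only [Matrix.of_apply, Matrix.cons_val]
  ring

open Polynomial in
theorem roots_charpoly_spiralMatrix [CommRing R] [IsDomain R] {i : R} (hi : i ^ 2 = -1)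
    (a ω c : R) :
    (spiralMatrix a ω c).charpoly.roots = {c, a + ω * i, a - ω * i} := by
  have hCi : (C i : R[X]) ^ 2 = -1 := by rw [← C_pow, hi, C_neg, C_1]
  have hfactor : (spiralMatrix a ω c).charpoly =
      (({c, a + ω * i, a - ω * i} : Multiset R).map fun r => X - C r).prod := by
    simp only [charpoly_spiralMatrix, Multiset.insert_eq_cons, Multiset.map_cons,
      Multiset.map_singleton, Multiset.prod_cons, Multiset.prod_singleton, C_add, C_sub, C_mul]
    linear_combination (X - C c) * C ω ^ 2 * hCi
  rw [hfactor, roots_multiset_prod_X_sub_C]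

theorem roots_charpoly_map_ofReal_spiralMatrix (a ω c : ℝ) :
    ((spiralMatrix a ω c).map Complex.ofReal).charpoly.roots =
      {(c : ℂ), a + ω * Complex.I, a - ω * Complex.I} := by
  have hmap : (spiralMatrix a ω c).map Complex.ofReal = spiralMatrix (a : ℂ) ω c :=
    spiralMatrix_map Complex.ofRealHom a ω c
  rw [hmap, roots_charpoly_spiralMatrix Complex.I_sq]

end SpiralMatrix

section IntervalAverage

variable {E : Type*} [NormedAddCommGroup E] [NormedSpace ℝ E] [CompleteSpace E] {a b : ℝ}

theorem intervalAverage_const (hab : a ≠ b) (c : E) : ⨍ _ in a..b, c = c := by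
  rw [interval_average_eq, intervalIntegral.integral_const,
    inv_smul_smul₀ (sub_ne_zero.mpr hab.symm)]

theorem intervalAverage_const_add_smul (hab : a ≠ b) {f : ℝ → E}
    (hf : IntervalIntegrable f volume a b) (c : E) (d : ℝ) :
    ⨍ s in a..b, (c + d • f s) = c + d • ⨍ s in a..b, f s := by
  have hdf : IntervalIntegrable (fun s => d • f s) volume a b := hf.smul d
  rw [interval_average_eq, intervalIntegral.integral_add intervalIntegrable_const hdf,
    smul_add, ← interval_average_eq, intervalAverage_const hab, intervalIntegral.integral_smul,
    smul_comm, ← interval_average_eq]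

theorem intervalAverage_sin_sq : ⨍ s in (0 : ℝ)..2 * π, sin s ^ 2 = 1 / 2 := by
  rw [interval_average_eq_div, integral_sin_sq, sin_two_pi, sin_zero]
  field_simp
  ring

theorem intervalAverage_cos_sq : ⨍ s in (0 : ℝ)..2 * π, cos s ^ 2 = 1 / 2 := by
  rw [interval_average_eq_div, integral_cos_sq, sin_two_pi, sin_zero]
  field_simp
  ring

theorem intervalAverage_sin_mul_cos : ⨍ s in (0 : ℝ)..2 * π, sin s * cos s = 0 := by
  simp [interval_average_eq, integral_sin_mul_cos₁]

end IntervalAverage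

theorem jacobian_apply_of_hasFDerivAt {F : (Fin 3 → ℝ) → Fin 3 → ℝ} {p : Fin 3 → ℝ} {i : Fin 3}
    {L : (Fin 3 → ℝ) →L[ℝ] ℝ} (hF : HasFDerivAt (fun v => F v i) L p) (j : Fin 3) :
    jacobian F p i j = L (Pi.single j 1) :=
  congrArg (· (Pi.single j 1)) hF.fderiv

/-- The rotationally symmetric field `(ω y + x g(x² + y²), -ω x + y g(x² + y²), h(z))`: planar
rotation with radial growth rate `g`, decoupled from the vertical dynamics `h`. -/
def rotationalField (ω : ℝ) (g h : ℝ → ℝ) (v : Fin 3 → ℝ) : Fin 3 → ℝ :=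
  ![ω * v 1 + v 0 * g (v 0 ^ 2 + v 1 ^ 2), -(ω * v 0) + v 1 * g (v 0 ^ 2 + v 1 ^ 2), h (v 2)]

section RotationalField

variable {g h : ℝ → ℝ} {g' h' z : ℝ}

theorem jacobian_rotationalField (ω : ℝ) {x y : ℝ} (hg : HasDerivAt g g' (x ^ 2 + y ^ 2))
    (hh : HasDerivAt h h' z) :
    jacobian (rotationalField ω g h) ![x, y, z] =
      !![g (x ^ 2 + y ^ 2) + 2 * g' * x ^ 2, ω + 2 * g' * (x * y), 0;
        -ω + 2 * g' * (x * y), g (x ^ 2 + y ^ 2) + 2 * g' * y ^ 2, 0;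
        0, 0, h'] := by
  let p : Fin 3 → ℝ := ![x, y, z]
  have hcoord (k : Fin 3) := hasFDerivAt_apply (𝕜 := ℝ) k p
  have hradial := hg.comp_hasFDerivAt p (((hcoord 0).pow 2).add ((hcoord 1).pow 2))
  have hcomponent₀ : HasFDerivAt (fun v => rotationalField ω g h v 0) _ p :=
    ((hcoord 1).const_mul ω).add ((hcoord 0).mul hradial)
  have hcomponent₁ : HasFDerivAt (fun v => rotationalField ω g h v 1) _ p :=
    ((hcoord 0).const_mul ω).neg.add ((hcoord 1).mul hradial)
  have hcomponent₂ : HasFDerivAt (fun v => rotationalField ω g h v 2) _ p :=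
    hh.comp_hasFDerivAt p (hcoord 2)
  ext i j
  fin_cases i
  · refine (jacobian_apply_of_hasFDerivAt hcomponent₀ j).trans ?_
    fin_cases j <;> simp [p] <;> ring
  · refine (jacobian_apply_of_hasFDerivAt hcomponent₁ j).trans ?_
    fin_cases j <;> simp [p] <;> ring
  · refine (jacobian_apply_of_hasFDerivAt hcomponent₂ j).trans ?_
    fin_cases j <;> simp

theorem intervalAverage_jacobian_rotationalField (ω ρ : ℝ) (hg : HasDerivAt g g' (ρ ^ 2))
    (hh : HasDerivAt h h' z) :
    (Matrix.of fun i j => ⨍ s in (0 : ℝ)..2 * π,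
        jacobian (rotationalField ω g h) ![ρ * sin s, ρ * cos s, z] i j) =
      spiralMatrix (g (ρ ^ 2) + ρ ^ 2 * g') ω h' := by
  have hcircle (s : ℝ) : (ρ * sin s) ^ 2 + (ρ * cos s) ^ 2 = ρ ^ 2 := by
    linear_combination ρ ^ 2 * sin_sq_add_cos_sq s
  have hjac (s : ℝ) : jacobian (rotationalField ω g h) ![ρ * sin s, ρ * cos s, z] =
      !![g (ρ ^ 2) + 2 * g' * ρ ^ 2 * sin s ^ 2, ω + 2 * g' * ρ ^ 2 * (sin s * cos s), 0;
        -ω + 2 * g' * ρ ^ 2 * (sin s * cos s), g (ρ ^ 2) + 2 * g' * ρ ^ 2 * cos s ^ 2, 0;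
        0, 0, h'] := by
    rw [jacobian_rotationalField ω ((hcircle s).symm ▸ hg) hh, hcircle]
    ring_nf
  have haverage {f : ℝ → ℝ} (hf : Continuous f) (c d : ℝ) :
      ⨍ s in (0 : ℝ)..2 * π, (c + d * f s) = c + d * ⨍ s in (0 : ℝ)..2 * π, f s :=
    intervalAverage_const_add_smul two_pi_pos.ne (hf.intervalIntegrable _ _) c d
  have hsin_sq (c d : ℝ) : ⨍ s in (0 : ℝ)..2 * π, (c + d * sin s ^ 2) = c + d / 2 := by
    rw [haverage (by fun_prop), intervalAverage_sin_sq, mul_one_div]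
  have hcos_sq (c d : ℝ) : ⨍ s in (0 : ℝ)..2 * π, (c + d * cos s ^ 2) = c + d / 2 := by
    rw [haverage (by fun_prop), intervalAverage_cos_sq, mul_one_div]
  have hsin_mul_cos (c d : ℝ) : ⨍ s in (0 : ℝ)..2 * π, (c + d * (sin s * cos s)) = c := by
    rw [haverage (by fun_prop), intervalAverage_sin_mul_cos, mul_zero, add_zero]
  have hconst (c : ℝ) : ⨍ _ in (0 : ℝ)..2 * π, c = c := intervalAverage_const two_pi_pos.ne c
  simp only [hjac]
  ext i j
  fin_cases i <;> fin_cases j <;>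
    simp [spiralMatrix, hsin_sq, hcos_sq, hsin_mul_cos, hconst] <;> ring

end RotationalField

theorem vf18_eq_rotationalField (α β : ℝ) :
    vf18 α β = rotationalField 1 (fun u => (1 - u) * (1 + α - u)) (fun z => β ^ 2 * z - z ^ 3) := by
  ext v i
  fin_cases i <;> simp [vf18, rotationalField] <;> ring

theorem intervalAverage_jacobian_vf18_unitCircle (α β z : ℝ) :
    (Matrix.of fun i j => ⨍ s in (0 : ℝ)..2 * π, jacobian (vf18 α β) ![sin s, cos s, z] i j) =
      spiralMatrix (-α) 1 (β ^ 2 - 3 * z ^ 2) := by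
  have hg : HasDerivAt (fun u : ℝ => (1 - u) * (1 + α - u)) (-α) (1 ^ 2) :=
    (((hasDerivAt_id _).const_sub 1).mul ((hasDerivAt_id _).const_sub (1 + α))).congr_deriv
      (by simp)
  have hh : HasDerivAt (fun z => β ^ 2 * z - z ^ 3) (β ^ 2 - 3 * z ^ 2) z :=
    (((hasDerivAt_id z).const_mul (β ^ 2)).sub (hasDerivAt_pow 3 z)).congr_deriv (by simp)
  simpa [vf18_eq_rotationalField] using intervalAverage_jacobian_rotationalField 1 1 hg hh

/-- the averaged Jacobian along the limit cycles (iii) and (iv) of system (18),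
its explicit value, and its eigenvalues (with real parts −2β², −α, −α). -/
theorem stmt_6 (α β : ℝ) :
    ∀ ε : ℝ, ε = 1 ∨ ε = -1 →
    ∀ A : Matrix (Fin 3) (Fin 3) ℝ,
      (A = Matrix.of fun i j =>
        (2 * π)⁻¹ * ∫ s in (0:ℝ)..(2 * π),
          jacobian (vf18 α β) ![Real.sin s, Real.cos s, ε * β] i j) →
      A = !![-α, 1, 0; -1, -α, 0; 0, 0, -2 * β ^ 2] ∧
      (A.map (Complex.ofReal)).charpoly.roots =
        {-2 * (β : ℂ) ^ 2, -(α : ℂ) + Complex.I, -(α : ℂ) - Complex.I} ∧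
      ((A.map (Complex.ofReal)).charpoly.roots.map Complex.re) = {-2 * β ^ 2, -α, -α} := by
  intro ε hε A hA
  have hεβ : β ^ 2 - 3 * (ε * β) ^ 2 = -2 * β ^ 2 := by
    rcases hε with rfl | rfl <;> ring
  have hspiral : A = spiralMatrix (-α) 1 (-2 * β ^ 2) := by
    rw [hA, ← hεβ, ← intervalAverage_jacobian_vf18_unitCircle]
    simp only [interval_average_eq, sub_zero, smul_eq_mul]
  have hroots : (A.map Complex.ofReal).charpoly.roots =
      {-2 * (β : ℂ) ^ 2, -(α : ℂ) + Complex.I, -(α : ℂ) - Complex.I} := by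
    rw [hspiral, roots_charpoly_map_ofReal_spiralMatrix]
    push_cast
    rw [one_mul]
  refine ⟨hspiral, hroots, ?_⟩
  rw [hroots]
  simp [← Complex.ofReal_pow]
end

section
/- Let B be the real 3×3 matrix ![![−1, 0, 0], ![0, −2, 1], ![0, −1, −3]]. Then the eigenvalues of B over ℂ are −1, (−5 + i√3)/2, and (−5 − i√3)/2, so the real parts of the eigenvalues of B are −1, −5/2, −5/2, whereas the symmetrized matrix (B + Bᵀ)/2 equals the diagonal matrix diag(−1, −2, −3) and has eigenvalues −1, −2, −3. -/
/-!
The first row of `B` splits off the eigenvalue `-1` and leaves a `2 × 2` block with trace `-5` and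
determinant `7`, whose characteristic polynomial has discriminant `25 - 28 = -3 < 0`: hence a
conjugate pair with real part `-5 / 2`. The off-diagonal part of `B` is skew-symmetric, so
symmetrization deletes it and leaves the diagonal of `B`.
-/

section Charpoly

open Matrix Polynomial

theorem charpoly_eq_mul_of_row_zero_eq_zero {R : Type*} [CommRing R] {n : ℕ}
    {M : Matrix (Fin (n + 1)) (Fin (n + 1)) R} (hM : ∀ j : Fin n, M 0 j.succ = 0) :
    M.charpoly = (X - C (M 0 0)) * (M.submatrix Fin.succ Fin.succ).charpoly := by
  have charmatrix_row_zero (j : Fin n) : M.charmatrix 0 j.succ = 0 := by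
    rw [charmatrix_apply_ne _ _ _ (Fin.succ_ne_zero j).symm, hM, C_0, neg_zero]
  have charmatrix_minor :
      M.charmatrix.submatrix Fin.succ Fin.succ = (M.submatrix Fin.succ Fin.succ).charmatrix := by
    ext1 i j
    simp only [submatrix_apply, charmatrix_apply, diagonal_apply, Fin.succ_inj]
  rw [charpoly, det_succ_row_zero, Fin.sum_univ_succ]
  simp [charmatrix_row_zero, charmatrix_minor, charpoly]

theorem roots_charpoly_eq_cons_of_row_zero_eq_zero {R : Type*} [CommRing R] [IsDomain R] {n : ℕ}
    {M : Matrix (Fin (n + 1)) (Fin (n + 1)) R} (hM : ∀ j : Fin n, M 0 j.succ = 0) :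
    M.charpoly.roots = M 0 0 ::ₘ (M.submatrix Fin.succ Fin.succ).charpoly.roots := by
  rw [charpoly_eq_mul_of_row_zero_eq_zero hM,
    roots_mul (mul_ne_zero (X_sub_C_ne_zero _) (charpoly_monic _).ne_zero), roots_X_sub_C,
    Multiset.singleton_add]

theorem roots_charpoly_diagonal {R n : Type*} [CommRing R] [IsDomain R] [Fintype n]
    [DecidableEq n] (d : n → R) :
    (diagonal d).charpoly.roots = Finset.univ.val.map d := by
  have charpoly_eq :
      (diagonal d).charpoly = ((Finset.univ.val.map d).map fun r ↦ X - C r).prod := by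
    rw [charpoly_diagonal, Multiset.map_map]
    rfl
  rw [charpoly_eq, roots_multiset_prod_X_sub_C]

theorem roots_charpoly_fin_two_of_add_eq_trace_of_mul_eq_det {R : Type*} [CommRing R] [IsDomain R]
    {M : Matrix (Fin 2) (Fin 2) R} {s t : R} (hadd : s + t = M.trace) (hmul : s * t = M.det) :
    M.charpoly.roots = {s, t} := by
  have charpoly_eq : M.charpoly = (X - C s) * (X - C t) := by
    rw [charpoly_fin_two, ← hadd, ← hmul, C_add, C_mul]
    ring
  rw [charpoly_eq, roots_mul (mul_ne_zero (X_sub_C_ne_zero s) (X_sub_C_ne_zero t)),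
    roots_X_sub_C, roots_X_sub_C, Multiset.singleton_add, Multiset.insert_eq_cons]

theorem roots_charpoly_fin_two_of_sq_eq_discrim {K : Type*} [Field K] [NeZero (2 : K)]
    {M : Matrix (Fin 2) (Fin 2) K} {δ : K} (hδ : δ ^ 2 = M.trace ^ 2 - 4 * M.det) :
    M.charpoly.roots = {(M.trace + δ) / 2, (M.trace - δ) / 2} := by
  have two_ne_zero : (2 : K) ≠ 0 := NeZero.ne 2
  apply roots_charpoly_fin_two_of_add_eq_trace_of_mul_eq_det
  · field
  · field_simp
    linear_combination -hδ

theorem roots_charpoly_map_ofReal_fin_two {M : Matrix (Fin 2) (Fin 2) ℝ}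
    (hM : M.trace ^ 2 ≤ 4 * M.det) :
    (M.map Complex.ofReal).charpoly.roots =
      {(M.trace + Complex.I * √(4 * M.det - M.trace ^ 2)) / 2,
        (M.trace - Complex.I * √(4 * M.det - M.trace ^ 2)) / 2} := by
  have trace_map : (M.map Complex.ofReal).trace = M.trace :=
    (AddMonoidHom.map_trace Complex.ofRealHom.toAddMonoidHom M).symm
  have det_map : (M.map Complex.ofReal).det = M.det := (Complex.ofRealHom.map_det M).symm
  have sq_sqrt : (√(4 * M.det - M.trace ^ 2) : ℂ) ^ 2 = 4 * M.det - M.trace ^ 2 := by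
    exact_mod_cast Real.sq_sqrt (sub_nonneg.mpr hM)
  rw [← trace_map]
  apply roots_charpoly_fin_two_of_sq_eq_discrim
  rw [mul_pow, Complex.I_sq, sq_sqrt, trace_map, det_map]
  ring

end Charpoly

/-- eigenvalues of B = ![![−1,0,0],![0,−2,1],![0,−1,−3]] are −1, (−5 ± i√3)/2,
with real parts −1, −5/2, −5/2, while (B + Bᵀ)/2 = diag(−1,−2,−3) with eigenvalues −1,−2,−3. -/
theorem stmt_11 :
    ∀ B : Matrix (Fin 3) (Fin 3) ℝ,
      B = !![-1, 0, 0; 0, -2, 1; 0, -1, -3] →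
      (B.map (Complex.ofReal)).charpoly.roots =
        {(-1 : ℂ), (-5 + Complex.I * Real.sqrt 3) / 2, (-5 - Complex.I * Real.sqrt 3) / 2} ∧
      ((B.map (Complex.ofReal)).charpoly.roots.map Complex.re) =
        {(-1 : ℝ), -5 / 2, -5 / 2} ∧
      (1 / 2 : ℝ) • (B + B.transpose) = Matrix.diagonal ![-1, -2, -3] ∧
      ((((1 / 2 : ℝ) • (B + B.transpose)).map (Complex.ofReal)).charpoly.roots) =
        {(-1 : ℂ), -2, -3} := by
  intro B hB
  have minor_eq : B.submatrix Fin.succ Fin.succ = !![-2, 1; -1, -3] := by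
    ext i j; fin_cases i <;> fin_cases j <;> simp [hB]
  have minor_trace : (B.submatrix Fin.succ Fin.succ).trace = -5 := by
    rw [minor_eq, Matrix.trace_fin_two_of]; norm_num
  have minor_det : (B.submatrix Fin.succ Fin.succ).det = 7 := by
    rw [minor_eq, Matrix.det_fin_two_of]; norm_num
  have roots_B : (B.map Complex.ofReal).charpoly.roots =
      {-1, (-5 + Complex.I * √3) / 2, (-5 - Complex.I * √3) / 2} := by
    rw [roots_charpoly_eq_cons_of_row_zero_eq_zero (by simp [hB, Fin.forall_fin_two]),
      Matrix.submatrix_map,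
      roots_charpoly_map_ofReal_fin_two (by norm_num [minor_trace, minor_det]),
      minor_trace, minor_det, show 4 * 7 - (-5 : ℝ) ^ 2 = 3 by norm_num]
    simp [hB]
  have symm_part : (1 / 2 : ℝ) • (B + B.transpose) = Matrix.diagonal ![-1, -2, -3] := by
    ext i j; fin_cases i <;> fin_cases j <;> norm_num [hB]
  refine ⟨roots_B, by simp [roots_B], symm_part, ?_⟩
  rw [symm_part, Matrix.diagonal_map Complex.ofReal_zero, roots_charpoly_diagonal]
  simp [Fin.univ_val_map, ← Multiset.cons_coe]
end

section
/- Let −1 < α < 0 and let u : ℝ → ℝ be a differentiable function satisfying u'(t) = 2u(t)(1 − u(t))(1 + α − u(t)) for all t ≥ 0, with 0 < u(0) < 1. Then u(t) ∈ (0, 1) for all t ≥ 0 and u(t) → 1 + α as t → +∞. -/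
open Filter

/-!
The interval `(0, 1)` lies between two equilibria of the scalar equation, so by uniqueness a
solution starting there never leaves it. On either side of the equilibrium `c` that is nearest to
`1 + α` in `[0, 1]` the field points towards `c`; hence the solution is monotone and bounded,
and the limit of a convergent solution has to be an equilibrium, which leaves only `c`.
-/

open Set Topology

section Limits

theorem tendsto_atTop_of_monotoneOn_of_isLUB {ι β : Type*} [LinearOrder ι]
    [TopologicalSpace β] [Preorder β] [SupConvergenceClass β] {f : ι → β} {a : ι} {L : β}
    (hf : MonotoneOn f (Ici a)) (hL : IsLUB (f '' Ici a) L) : Tendsto f atTop (𝓝 L) := by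
  rw [← tendsto_comp_val_Ici_atTop (a := a)]
  rw [image_eq_range] at hL
  exact tendsto_atTop_isLUB (fun x y hxy ↦ hf x.2 y.2 hxy) hL

theorem eq_zero_of_tendsto_of_tendsto_hasDerivAt {E : Type*} [NormedAddCommGroup E]
    [NormedSpace ℝ E] {g g' : ℝ → E} {L d : E} (hderiv : ∀ᶠ t in atTop, HasDerivAt g (g' t) t)
    (hg : Tendsto g atTop (𝓝 L)) (hg' : Tendsto g' atTop (𝓝 d)) : d = 0 := by
  have increment_zero : Tendsto (fun t ↦ g (t + 1) - g t) atTop (𝓝 0) := by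
    simpa only [sub_self, Function.comp_def, id] using
      (hg.comp (tendsto_atTop_add_const_right atTop (1 : ℝ) tendsto_id)).sub hg
  refine tendsto_nhds_unique (Metric.tendsto_nhds.mpr fun ε hε ↦ ?_) increment_zero
  obtain ⟨T, hT⟩ := eventually_atTop.mp
    (hderiv.and (Metric.tendsto_nhds.mp hg' (ε / 2) (half_pos hε)))
  filter_upwards [eventually_ge_atTop T] with t ht
  have mean_value := norm_image_sub_le_of_norm_deriv_le_segment' (a := t) (b := t + 1)
    (f := fun s ↦ g s - s • d) (f' := fun s ↦ g' s - (1 : ℝ) • d) (C := ε / 2)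
    (fun s hs ↦ ((hT s (ht.trans hs.1)).1.sub
      ((hasDerivAt_id s).smul_const d)).hasDerivWithinAt)
    (fun s hs ↦ by
      simpa only [one_smul, dist_eq_norm] using (hT s (ht.trans hs.1)).2.le)
    (t + 1) (right_mem_Icc.mpr (by linarith))
  calc dist (g (t + 1) - g t) d
      = ‖g (t + 1) - (t + 1) • d - (g t - t • d)‖ := by
        rw [dist_eq_norm]; congr 1; module
    _ ≤ ε / 2 * (t + 1 - t) := mean_value
    _ < ε := by linarith

end Limits

section AutonomousODE

variable {E : Type*} [NormedAddCommGroup E] [NormedSpace ℝ E] {f : E → E} {u : ℝ → E}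
  {s : Set ℝ} {t₀ : ℝ} {p : E}

theorem eq_zero_of_isIntegralCurveOn_of_tendsto (hf : ContinuousAt f p)
    (hu : IsIntegralCurveOn u (fun _ ↦ f) (Ici t₀)) (hlim : Tendsto u atTop (𝓝 p)) :
    f p = 0 :=
  eq_zero_of_tendsto_of_tendsto_hasDerivAt
    (by filter_upwards [eventually_gt_atTop t₀] with t ht
        exact (hu t ht.le).hasDerivAt (Ici_mem_nhds ht))
    hlim (hf.tendsto.comp hlim)

theorem eqOn_const_of_isIntegralCurveOn (hf : LocallyLipschitz f) (hp : f p = 0)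
    (hs : s.OrdConnected) (hu : IsIntegralCurveOn u (fun _ ↦ f) s) (ht₀ : t₀ ∈ s)
    (hu₀ : u t₀ = p) : EqOn u (fun _ ↦ p) s := by
  have lipschitz_on_trajectory {a b : ℝ} (hab : Icc a b ⊆ s) :
      ∃ K, LipschitzOnWith K f (u '' Icc a b) :=
    (hf.locallyLipschitzOn (s := _)).exists_lipschitzOnWith_of_compact
      (isCompact_Icc.image_of_continuousOn (hu.mono hab).continuousOn)
  have hasDerivAt_const (t : ℝ) : HasDerivAt (fun _ ↦ p) (f p) t := hp ▸ hasDerivAt_const t p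
  intro t ht
  rcases le_total t₀ t with h | h
  · have hsub : Icc t₀ t ⊆ s := hs.out ht₀ ht
    obtain ⟨K, hK⟩ := lipschitz_on_trajectory hsub
    exact ODE_solution_unique_of_mem_Icc_right (v := fun _ ↦ f) (s := fun _ ↦ u '' Icc t₀ t)
      (fun _ _ ↦ hK) (hu.mono hsub).continuousOn
      (fun r hr ↦ (hu.mono hsub r (Ico_subset_Icc_self hr)).mono_of_mem_nhdsWithin
        (Icc_mem_nhdsGE_of_mem hr))
      (fun r hr ↦ mem_image_of_mem u (Ico_subset_Icc_self hr)) continuousOn_const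
      (fun r _ ↦ (hasDerivAt_const r).hasDerivWithinAt)
      (fun _ _ ↦ ⟨t₀, left_mem_Icc.mpr h, hu₀⟩) hu₀ (right_mem_Icc.mpr h)
  · have hsub : Icc t t₀ ⊆ s := hs.out ht ht₀
    obtain ⟨K, hK⟩ := lipschitz_on_trajectory hsub
    exact ODE_solution_unique_of_mem_Icc_left (v := fun _ ↦ f) (s := fun _ ↦ u '' Icc t t₀)
      (fun _ _ ↦ hK) (hu.mono hsub).continuousOn
      (fun r hr ↦ (hu.mono hsub r (Ioc_subset_Icc_self hr)).mono_of_mem_nhdsWithin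
        (Icc_mem_nhdsLE_of_mem hr))
      (fun r hr ↦ mem_image_of_mem u (Ioc_subset_Icc_self hr)) continuousOn_const
      (fun r _ ↦ (hasDerivAt_const r).hasDerivWithinAt)
      (fun _ _ ↦ ⟨t₀, right_mem_Icc.mpr h, hu₀⟩) hu₀ (left_mem_Icc.mpr h)

end AutonomousODE

section PhaseLine

variable {f u : ℝ → ℝ} {s : Set ℝ} {t₀ p : ℝ}

theorem isIntegralCurveOn_neg (hu : IsIntegralCurveOn u (fun _ ↦ f) s) :
    IsIntegralCurveOn (-u) (fun _ x ↦ -f (-x)) s := fun t ht ↦ by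
  simpa only [Pi.neg_apply, neg_neg] using (hu t ht).neg

theorem locallyLipschitz_neg_comp_neg (hf : LocallyLipschitz f) :
    LocallyLipschitz fun x ↦ -f (-x) :=
  (hf.comp LocallyLipschitz.id.neg).neg

theorem mapsTo_Iio_of_isIntegralCurveOn (hf : LocallyLipschitz f) (hp : f p = 0)
    (hs : s.OrdConnected) (hu : IsIntegralCurveOn u (fun _ ↦ f) s) (ht₀ : t₀ ∈ s)
    (hu₀ : u t₀ < p) : MapsTo u s (Iio p) := by
  intro t ht
  by_contra hpt
  obtain ⟨r, hr, hur⟩ := hs.isPreconnected.intermediate_value ht₀ ht hu.continuousOn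
    ⟨hu₀.le, not_lt.mp hpt⟩
  exact hu₀.ne (eqOn_const_of_isIntegralCurveOn hf hp hs hu hr hur ht₀)

theorem mapsTo_Ioi_of_isIntegralCurveOn (hf : LocallyLipschitz f) (hp : f p = 0)
    (hs : s.OrdConnected) (hu : IsIntegralCurveOn u (fun _ ↦ f) s) (ht₀ : t₀ ∈ s)
    (hu₀ : p < u t₀) : MapsTo u s (Ioi p) := fun t ht ↦
  mem_Ioi.mpr <| neg_lt_neg_iff.mp <| mapsTo_Iio_of_isIntegralCurveOn (p := -p)
    (locallyLipschitz_neg_comp_neg hf) (by rw [neg_neg, hp, neg_zero]) hs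
    (isIntegralCurveOn_neg hu) ht₀ (neg_lt_neg hu₀) ht

theorem mapsTo_Ici_of_isIntegralCurveOn_of_pos
    (hu : IsIntegralCurveOn u (fun _ ↦ f) (Ici t₀)) (hpos : 0 < f (u t₀)) :
    MapsTo u (Ici t₀) (Ici (u t₀)) := fun t ht ↦
  image_le_of_deriv_right_lt_deriv_boundary' (f := fun _ ↦ u t₀) (f' := 0) (a := t₀) (b := t)
    continuousOn_const (fun r _ ↦ hasDerivWithinAt_const r _ _) le_rfl
    (hu.mono Icc_subset_Ici_self).continuousOn
    (fun r hr ↦ (hu r hr.1).mono (Ici_subset_Ici.mpr hr.1))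
    (fun r _ hur ↦ show 0 < f (u r) from hur ▸ hpos) (right_mem_Icc.mpr ht)

theorem tendsto_of_isIntegralCurveOn_of_pos (hf : LocallyLipschitz f) (hp : f p = 0)
    (hu : IsIntegralCurveOn u (fun _ ↦ f) (Ici t₀)) (hu₀ : u t₀ < p)
    (hpos : ∀ x ∈ Ico (u t₀) p, 0 < f x) : Tendsto u atTop (𝓝 p) := by
  have hmem : MapsTo u (Ici t₀) (Ico (u t₀) p) := fun t ht ↦
    ⟨mapsTo_Ici_of_isIntegralCurveOn_of_pos hu (hpos _ ⟨le_rfl, hu₀⟩) ht,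
      mapsTo_Iio_of_isIntegralCurveOn hf hp ordConnected_Ici hu self_mem_Ici hu₀ ht⟩
  have hmono : MonotoneOn u (Ici t₀) :=
    monotoneOn_of_hasDerivWithinAt_nonneg (convex_Ici t₀) hu.continuousOn
      (fun t ht ↦ (hu t (interior_subset ht)).mono interior_subset)
      (fun t ht ↦ (hpos _ (hmem (interior_subset ht))).le)
  obtain ⟨L, hL⟩ : ∃ L, IsLUB (u '' Ici t₀) L :=
    Real.exists_isLUB (nonempty_Ici.image u) ⟨p, forall_mem_image.mpr fun t ht ↦ (hmem ht).2.le⟩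
  have hlim : Tendsto u atTop (𝓝 L) := tendsto_atTop_of_monotoneOn_of_isLUB hmono hL
  have hfL : f L = 0 :=
    eq_zero_of_isIntegralCurveOn_of_tendsto hf.continuous.continuousAt hu hlim
  have hu₀L : u t₀ ≤ L := hL.1 (mem_image_of_mem u self_mem_Ici)
  have hLp : L ≤ p := hL.2 (forall_mem_image.mpr fun t ht ↦ (hmem ht).2.le)
  obtain rfl : L = p := hLp.eq_of_not_lt fun h ↦ (hpos L ⟨hu₀L, h⟩).ne' hfL
  exact hlim

theorem tendsto_of_isIntegralCurveOn_of_pos_of_neg (hf : LocallyLipschitz f) (hp : f p = 0)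
    (hu : IsIntegralCurveOn u (fun _ ↦ f) (Ici t₀)) (hpos : ∀ x ∈ Ico (u t₀) p, 0 < f x)
    (hneg : ∀ x ∈ Ioc p (u t₀), f x < 0) : Tendsto u atTop (𝓝 p) := by
  rcases lt_trichotomy (u t₀) p with hlt | heq | hgt
  · exact tendsto_of_isIntegralCurveOn_of_pos hf hp hu hlt hpos
  · have hconst := eqOn_const_of_isIntegralCurveOn hf hp ordConnected_Ici hu self_mem_Ici heq
    exact tendsto_const_nhds.congr' (hconst.symm.eventuallyEq_of_mem (Ici_mem_atTop t₀))
  · have hlim := tendsto_of_isIntegralCurveOn_of_pos (p := -p)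
      (locallyLipschitz_neg_comp_neg hf) (by rw [neg_neg, hp, neg_zero])
      (isIntegralCurveOn_neg hu) (neg_lt_neg hgt)
      (fun x hx ↦ neg_pos.mpr (hneg (-x) ⟨lt_neg_of_lt_neg hx.2, neg_le.mp hx.1⟩))
    simpa only [Pi.neg_apply, neg_neg] using hlim.neg

end PhaseLine

/-- The field of the equation satisfied by `u = x² + y²` along the solutions of system (18). -/
def radialField (α x : ℝ) : ℝ := 2 * x * (1 - x) * (1 + α - x)

/-- The point of `[0, 1]` nearest to `1 + α`: the equilibrium of `radialField α` that attracts
`(0, 1)`. -/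
noncomputable def radialAttractor (α : ℝ) : ℝ := max 0 (min 1 (1 + α))

section RadialField

variable {α x : ℝ}

theorem locallyLipschitz_radialField : LocallyLipschitz (radialField α) := by
  have hsmooth : ContDiff ℝ 1 (radialField α) := by unfold radialField; fun_prop
  exact fun _ ↦ hsmooth.contDiffAt.exists_lipschitzOnWith

theorem radialField_zero : radialField α 0 = 0 := by simp [radialField]

theorem radialField_one : radialField α 1 = 0 := by simp [radialField]

theorem radialField_radialAttractor : radialField α (radialAttractor α) = 0 := by
  unfold radialAttractor
  rcases max_choice 0 (min 1 (1 + α)) with h | h <;> rw [h]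
  · exact radialField_zero
  · rcases min_choice 1 (1 + α) with h' | h' <;> rw [h']
    · exact radialField_one
    · simp [radialField]

theorem radialField_pos (hx₀ : 0 < x) (hx : x < radialAttractor α) : 0 < radialField α x := by
  obtain ⟨hx₁, hxα⟩ := lt_min_iff.mp ((lt_max_iff.mp hx).resolve_left hx₀.not_gt)
  exact mul_pos (mul_pos (by linarith) (by linarith)) (by linarith)

theorem radialField_neg (hx : radialAttractor α < x) (hx₁ : x < 1) : radialField α x < 0 := by
  obtain ⟨hx₀, hmin⟩ := max_lt_iff.mp hx
  have hxα : 1 + α < x := (min_lt_iff.mp hmin).resolve_left hx₁.not_gt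
  exact mul_neg_of_pos_of_neg (mul_pos (by linarith) (by linarith)) (by linarith)

end RadialField

theorem stmt_17_general {α : ℝ} {u : ℝ → ℝ}
    (hu : IsIntegralCurveOn u (fun _ ↦ radialField α) (Ici 0)) (h0 : 0 < u 0) (h1 : u 0 < 1) :
    (∀ t : ℝ, 0 ≤ t → u t ∈ Ioo 0 1) ∧ Tendsto u atTop (𝓝 (radialAttractor α)) := by
  have hf : LocallyLipschitz (radialField α) := locallyLipschitz_radialField
  refine ⟨fun t ht ↦ ⟨?_, ?_⟩, ?_⟩
  · exact mapsTo_Ioi_of_isIntegralCurveOn hf radialField_zero ordConnected_Ici hu self_mem_Ici h0 ht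
  · exact mapsTo_Iio_of_isIntegralCurveOn hf radialField_one ordConnected_Ici hu self_mem_Ici h1 ht
  · exact tendsto_of_isIntegralCurveOn_of_pos_of_neg hf radialField_radialAttractor hu
      (fun x hx ↦ radialField_pos (h0.trans_le hx.1) hx.2)
      (fun x hx ↦ radialField_neg hx.1 (hx.2.trans_lt h1))

/-- for −1 < α < 0, a solution of u' = 2u(1 − u)(1 + α − u) with
0 < u(0) < 1 stays in (0, 1) for t ≥ 0 and tends to 1 + α as t → +∞. -/
theorem stmt_17 (α : ℝ) (hα₁ : -1 < α) (hα₂ : α < 0) (u : ℝ → ℝ) (hu : Differentiable ℝ u)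
    (hODE : ∀ t : ℝ, 0 ≤ t →
      deriv u t = 2 * u t * (1 - u t) * (1 + α - u t))
    (h0 : 0 < u 0) (h1 : u 0 < 1) :
    (∀ t : ℝ, 0 ≤ t → u t ∈ Set.Ioo (0 : ℝ) 1) ∧
    Tendsto u atTop (nhds (1 + α)) := by
  have hcurve : IsIntegralCurveOn u (fun _ ↦ radialField α) (Ici 0) := fun t ht ↦
    ((hu t).hasDerivAt.congr_deriv (hODE t ht)).hasDerivWithinAt
  have hattr : radialAttractor α = 1 + α := by
    rw [radialAttractor, min_eq_right (by linarith), max_eq_right (by linarith)]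
  exact hattr ▸ stmt_17_general hcurve h0 h1
end

section
/- Let β be a real parameter and let (x, y, z) : ℝ → ℝ³ be a differentiable solution of system (19). Then u(t) = x(t)² + y(t)² satisfies u'(t) = 2u(t)(1 − u(t))³ for all t. Moreover, if u : ℝ → ℝ is any differentiable function satisfying u'(t) = 2u(t)(1 − u(t))³ for all t ≥ 0 with u(0) > 0, then u(t) → 1 as t → +∞. -/
open Filter

/-!
For the scalar equation `u' = g u` with `g v = 2 * v * (1 - v) ^ 3` only the sign of `g` matters:
positive on `(0, 1)`, negative on `(1, ∞)`. If `g` is positive on `[c, a]`, then by compactness it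
exceeds some `m > 0` there, so a solution starting above `c` stays above the line of slope `m`
issued from `c` until that line reaches `a`, and afterwards it cannot cross the level `a`
downwards. Hence `u` eventually exceeds every level below `1` and, by reflection, eventually drops
below every level above `1`. The degeneracy of `g` at `1` (zero Lyapunov exponent) affects only
the rate of convergence.
-/

open Set Topology

lemma hasDerivAt_sq_add_sq_of_rotation_add_radial {x y : ℝ → ℝ} {ω h t : ℝ}
    (hx : HasDerivAt x (ω * y t + x t * h) t) (hy : HasDerivAt y (-(ω * x t) + y t * h) t) :
    HasDerivAt (fun s => x s ^ 2 + y s ^ 2) (2 * (x t ^ 2 + y t ^ 2) * h) t := by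
  refine ((hx.fun_pow 2).fun_add (hy.fun_pow 2)).congr_deriv ?_
  push_cast
  ring

section RightDerivative

variable {u u' : ℝ → ℝ} {t₀ c m a : ℝ}

lemma line_le_of_lt_deriv_right {T : ℝ} (hu : ContinuousOn u (Icc t₀ T))
    (hu' : ∀ t ∈ Ico t₀ T, HasDerivWithinAt u (u' t) (Ici t) t) (h₀ : c ≤ u t₀)
    (hcontact : ∀ t ∈ Ico t₀ T, u t = c + m * (t - t₀) → m < u' t) :
    ∀ t ∈ Icc t₀ T, c + m * (t - t₀) ≤ u t := by
  have hline (t : ℝ) : HasDerivAt (fun s => c + m * (s - t₀)) m t := by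
    simpa using (((hasDerivAt_id t).sub_const t₀).const_mul m).const_add c
  exact image_le_of_deriv_right_lt_deriv_boundary'
    (fun t _ => (hline t).continuousAt.continuousWithinAt)
    (fun t _ => (hline t).hasDerivWithinAt) (by simpa using h₀) hu hu'
    fun t ht hEq => hcontact t ht hEq.symm

lemma le_of_lt_deriv_right_of_mem_Icc (hu : ContinuousOn u (Ici t₀))
    (hu' : ∀ t ∈ Ici t₀, HasDerivWithinAt u (u' t) (Ici t) t) (hm : 0 < m) (hca : c ≤ a)
    (h₀ : c ≤ u t₀) (hspeed : ∀ t ∈ Ici t₀, u t ∈ Icc c a → m < u' t) {t : ℝ}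
    (ht : t₀ + (a - c) / m ≤ t) : a ≤ u t := by
  set T := t₀ + (a - c) / m with hT
  have hT₀ : t₀ ≤ T := le_add_of_nonneg_right (div_nonneg (sub_nonneg.2 hca) hm.le)
  have hlineT : c + m * (T - t₀) = a := by rw [hT]; field_simp; ring
  have hreach : a ≤ u T := by
    rw [← hlineT]
    refine line_le_of_lt_deriv_right (hu.mono Icc_subset_Ici_self) (fun s hs => hu' s hs.1) h₀
      (fun s hs hEq => hspeed s hs.1 ?_) T ⟨hT₀, le_rfl⟩
    rw [hEq, ← hlineT]
    have hs₀ : 0 ≤ s - t₀ := sub_nonneg.2 hs.1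
    exact ⟨le_add_of_nonneg_right (by positivity), by gcongr; exact hs.2.le⟩
  have hstay : a + 0 * (t - T) ≤ u t :=
    line_le_of_lt_deriv_right (hu.mono fun s hs => hT₀.trans hs.1)
      (fun s hs => hu' s (hT₀.trans hs.1)) hreach
      (fun s hs hEq => hm.trans (hspeed s (hT₀.trans hs.1) (by simpa [hEq] using hca)))
      t ⟨ht, le_rfl⟩
  simpa using hstay

end RightDerivative

section AutonomousEquation

variable {g u : ℝ → ℝ} {t₀ c a : ℝ}

lemma eventually_ge_of_deriv_right_eq_of_pos (hu : ContinuousOn u (Ici t₀))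
    (hu' : ∀ t ∈ Ici t₀, HasDerivWithinAt u (g (u t)) (Ici t) t)
    (hg : ContinuousOn g (Icc c a)) (hpos : ∀ v ∈ Icc c a, 0 < g v) (hca : c ≤ a)
    (h₀ : c ≤ u t₀) : ∀ᶠ t in atTop, a ≤ u t := by
  obtain ⟨k, hk, hkg⟩ := isCompact_Icc.exists_forall_le' hg hpos
  obtain ⟨m, hm, hmk⟩ := exists_between hk
  filter_upwards [eventually_ge_atTop (t₀ + (a - c) / m)] with t ht
  exact le_of_lt_deriv_right_of_mem_Icc hu hu' hm hca h₀
    (fun s _ hs => hmk.trans_le (hkg (u s) hs)) ht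

lemma eventually_le_of_deriv_right_eq_of_neg (hu : ContinuousOn u (Ici t₀))
    (hu' : ∀ t ∈ Ici t₀, HasDerivWithinAt u (g (u t)) (Ici t) t)
    (hg : ContinuousOn g (Icc a c)) (hneg : ∀ v ∈ Icc a c, g v < 0) (hac : a ≤ c)
    (h₀ : u t₀ ≤ c) : ∀ᶠ t in atTop, u t ≤ a := by
  have hmem {v : ℝ} (hv : v ∈ Icc (-c) (-a)) : -v ∈ Icc a c :=
    ⟨le_neg_of_le_neg hv.2, neg_le.1 hv.1⟩
  have hreflect : ∀ᶠ t in atTop, -a ≤ -u t :=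
    eventually_ge_of_deriv_right_eq_of_pos (g := fun v => -g (-v)) (c := -c) hu.neg
      (fun t ht => by simpa using (hu' t ht).fun_neg)
      (hg.comp continuousOn_id.neg fun _ => hmem).neg
      (fun v hv => neg_pos.2 (hneg (-v) (hmem hv))) (neg_le_neg hac) (neg_le_neg h₀)
  simpa using hreflect

theorem tendsto_of_deriv_right_eq_of_pos_of_neg {I : Set ℝ} {p : ℝ} (hI : I.OrdConnected)
    (hu : ContinuousOn u (Ici t₀))
    (hu' : ∀ t ∈ Ici t₀, HasDerivWithinAt u (g (u t)) (Ici t) t) (h₀ : u t₀ ∈ I)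
    (hp : I ∈ 𝓝 p) (hg : ContinuousOn g I) (hpos : ∀ v ∈ I, v < p → 0 < g v)
    (hneg : ∀ v ∈ I, p < v → g v < 0) : Tendsto u atTop (𝓝 p) := by
  refine tendsto_order.2 ⟨fun b hb => ?_, fun b hb => ?_⟩
  · obtain ⟨a, haI, hba, hap⟩ :=
      Filter.nonempty_of_mem (inter_mem (mem_nhdsWithin_of_mem_nhds hp) (Ioo_mem_nhdsLT hb))
    have hsub : Icc (min a (u t₀)) a ⊆ I := hI.out (min_rec' (· ∈ I) haI h₀) haI
    filter_upwards [eventually_ge_of_deriv_right_eq_of_pos hu hu' (hg.mono hsub)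
      (fun v hv => hpos v (hsub hv) (hv.2.trans_lt hap)) (min_le_left _ _) (min_le_right _ _)]
      with t ht using hba.trans_le ht
  · obtain ⟨a, haI, hpa, hab⟩ :=
      Filter.nonempty_of_mem (inter_mem (mem_nhdsWithin_of_mem_nhds hp) (Ioo_mem_nhdsGT hb))
    have hsub : Icc a (max a (u t₀)) ⊆ I := hI.out haI (max_rec' (· ∈ I) haI h₀)
    filter_upwards [eventually_le_of_deriv_right_eq_of_neg hu hu' (hg.mono hsub)
      (fun v hv => hneg v (hsub hv) (hpa.trans_le hv.1)) (le_max_left _ _) (le_max_right _ _)]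
      with t ht using ht.trans_lt hab

end AutonomousEquation

/-- along any differentiable solution of system (19), u = x² + y² satisfies
u' = 2u(1 − u)³; moreover any differentiable u with u' = 2u(1 − u)³ for t ≥ 0 and u(0) > 0
tends to 1 as t → +∞. -/
theorem stmt_19 (β : ℝ) :
    (∀ x y z : ℝ → ℝ,
      (∀ t : ℝ, HasDerivAt x (y t + x t * (1 - x t ^ 2 - y t ^ 2) ^ 3) t) →
      (∀ t : ℝ, HasDerivAt y (-x t + y t * (1 - x t ^ 2 - y t ^ 2) ^ 3) t) →
      (∀ t : ℝ, HasDerivAt z (β ^ 2 * z t - z t ^ 3) t) →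
      ∀ t : ℝ, HasDerivAt (fun t => x t ^ 2 + y t ^ 2)
        (2 * (x t ^ 2 + y t ^ 2) * (1 - (x t ^ 2 + y t ^ 2)) ^ 3) t) ∧
    (∀ u : ℝ → ℝ, Differentiable ℝ u →
      (∀ t : ℝ, 0 ≤ t → deriv u t = 2 * u t * (1 - u t) ^ 3) →
      0 < u 0 → Tendsto u atTop (nhds 1)) := by
  refine ⟨fun x y _ hx hy _ t => ?_, fun u hu hderiv h₀ => ?_⟩
  · rw [← sub_sub]
    exact hasDerivAt_sq_add_sq_of_rotation_add_radial (ω := 1) (by simpa using hx t)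
      (by simpa using hy t)
  · have hsol (t : ℝ) (ht : t ∈ Ici 0) :
        HasDerivWithinAt u (2 * u t * (1 - u t) ^ 3) (Ici t) t :=
      hderiv t ht ▸ (hu t).hasDerivAt.hasDerivWithinAt
    refine tendsto_of_deriv_right_eq_of_pos_of_neg (g := fun v => 2 * v * (1 - v) ^ 3)
      ordConnected_Ioi hu.continuous.continuousOn hsol h₀ (Ioi_mem_nhds one_pos) (by fun_prop)
      (fun v (hv : 0 < v) hv1 => ?_) (fun v (hv : 0 < v) hv1 => ?_)
    · exact mul_pos (by positivity) (pow_pos (sub_pos.2 hv1) 3)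
    · exact mul_neg_of_pos_of_neg (by positivity) (Odd.pow_neg (by decide) (sub_neg.2 hv1))
end
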